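/- arXiv:1203.4450 — 2 statements merged into one kernel-verified Lean document; each statement's English description precedes it below -/
import Mathlib

section
/- Let R be a commutative ring and let I = (x_1,…,x_s) be a finitely generated ideal. Let V = R[X_1,…,X_s] and let φ : V → R(I) be the graded R-algebra surjection sending X_i to x_i t, with kernel Q = ker φ. Then for every n ≥ 2 there is an isomorphism of R-modules ker(α_{I,n}) ≅ ker(φ_n)/(V_{n-1}·ker(φ_1)), where φ_n denotes the degree-n component of φ and V_{n-1} the degree-(n−1) homogeneous component of V. -/
open MvPolynomial

open scoped TensorProduct
open PiTensorProduct

section SymDefs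

variable (R : Type*) [CommRing R]

/-- The `n`-fold tensor power of (the `R`-module underlying) the ideal `I`. -/
abbrev TensPow (I : Ideal R) (n : ℕ) : Type _ := ⨂[R] (_ : Fin n), ↥I

/-- The multilinear "product" map `(v₁,…,vₙ) ↦ v₁⋯vₙ : Iⁿ ⊆ R`. -/
noncomputable def prodML (I : Ideal R) (n : ℕ) :
    MultilinearMap R (fun _ : Fin n => ↥I) R :=
  (MultilinearMap.mkPiAlgebra R (Fin n) R).compLinearMap fun _ => I.subtype

/-- The symmetrizer relations in the `n`-th tensor power of `I`. -/
noncomputable def symRel (I : Ideal R) (n : ℕ) : Submodule R (TensPow R I n) :=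
  Submodule.span R {z | ∃ (v : Fin n → ↥I) (σ : Equiv.Perm (Fin n)),
    z = tprod R v - tprod R (v ∘ σ)}

/-- The `n`-th symmetric power `Symⁿ(I)` of the ideal `I`, i.e. the `n`-th graded
component of the symmetric algebra of the `R`-module `I`. -/
abbrev SymPow (I : Ideal R) (n : ℕ) : Type _ := TensPow R I n ⧸ symRel R I n

/-- The `n`-th component `α_{I,n} : Symₙ(I) → Iⁿ ⊆ R` of the canonical morphism
`α_I : Sym(I) → R(I)` (composed with the inclusion `Iⁿ ⊆ R`; it is an isomorphism
onto `Iⁿ` iff it is injective as a map to `R`). -/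
noncomputable def alphaCan (I : Ideal R) (n : ℕ) : SymPow R I n →ₗ[R] R :=
  Submodule.liftQ (symRel R I n) (PiTensorProduct.lift (prodML R I n)) (by
    rw [symRel, Submodule.span_le]
    rintro z ⟨v, σ, rfl⟩
    simp only [SetLike.mem_coe, LinearMap.mem_ker, map_sub, PiTensorProduct.lift.tprod]
    have : prodML R I n (v ∘ σ) = prodML R I n v := by
      simp only [prodML, MultilinearMap.compLinearMap_apply,
        MultilinearMap.mkPiAlgebra_apply, Function.comp_apply]
      exact Equiv.prod_comp σ fun i => ((v i : R))
    rw [this, sub_self])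

end SymDefs

section PresDefs

variable {R : Type*} [CommRing R]

/-- The presentation of the Rees algebra of the ideal generated by `g`,
sending the `i`-th variable to `(g i) · t` inside `R[t]`. -/
noncomputable def reesPres {m : ℕ} (g : Fin m → R) :
    MvPolynomial (Fin m) R →ₐ[R] Polynomial R :=
  aeval fun i => Polynomial.C (g i) * Polynomial.X

/-- `Q = ker φ`, the ideal of equations of the Rees algebra w.r.t. the generators `g`. -/
noncomputable def presKer {m : ℕ} (g : Fin m → R) : Ideal (MvPolynomial (Fin m) R) :=
  RingHom.ker (reesPres g)

/-- `ker φₙ`, the `R`-module of homogeneous equations of degree `n`. -/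
noncomputable def presKerHomog {m : ℕ} (g : Fin m → R) (n : ℕ) :
    Submodule R (MvPolynomial (Fin m) R) :=
  homogeneousSubmodule (Fin m) R n ⊓ (presKer g).restrictScalars R

/-- `V_{n-1}·ker φ₁`, the `R`-submodule of `V = R[X₁,…,Xₘ]` spanned by the products
of a form of degree `n-1` with a linear equation. -/
noncomputable def linMul {m : ℕ} (g : Fin m → R) (n : ℕ) :
    Submodule R (MvPolynomial (Fin m) R) :=
  Submodule.span R {A | ∃ B G : MvPolynomial (Fin m) R,
    B.IsHomogeneous (n - 1) ∧ G ∈ presKer g ∧ G.IsHomogeneous 1 ∧ A = B * G}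

end PresDefs

/-!
Substituting generators `yᵢ` of `I` for the variables gives a surjection `βₙ : Vₙ → Symₙ(I)` with
`φₙ = α_{I,n} ∘ βₙ`, so `βₙ` restricts to a surjection `ker φₙ → ker α_{I,n}` with kernel `ker βₙ`.
It remains to see that `ker βₙ = V_{n-1} · ker φ₁`. If `J ⊆ V` is the ideal generated by `ker φ₁`,
then `yᵢ ↦ Xᵢ` is a well-defined linear map `I → V/J`, and by multiplication it induces
`Symₙ(I) → V/J`, whose composite with `βₙ` is the quotient map. Hence `ker βₙ ⊆ J ∩ Vₙ`, and
`J ∩ Vₙ = V_{n-1} · ker φ₁` since `J` is generated by linear forms.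
-/

section Tuples

variable {κ ι : Type*} [Fintype κ]

/-- The exponent of the monomial `∏ j, X (i j)`: the multiplicity of each index in the tuple `i`. -/
noncomputable def tupleExponent (i : κ → ι) : ι →₀ ℕ :=
  ∑ j, Finsupp.single (i j) 1

lemma prod_X_eq_monomial_tupleExponent (R : Type*) [CommSemiring R] (i : κ → ι) :
    ∏ j, (X (i j) : MvPolynomial ι R) = monomial (tupleExponent i) 1 :=
  (monomial_sum_one _ _).symm

lemma tupleExponent_apply (i : κ → ι) (c : ι) :
    tupleExponent i c = Nat.card {j // i j = c} := by
  classical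
  simp [tupleExponent, Finsupp.finsetSum_apply, Finsupp.single_apply, Fintype.card_subtype]

lemma exists_perm_comp_eq_of_tupleExponent_eq {i k : κ → ι}
    (h : tupleExponent i = tupleExponent k) : ∃ σ : Equiv.Perm κ, k ∘ σ = i := by
  have card_fiber_eq (c : ι) : Nat.card {j // i j = c} = Nat.card {j // k j = c} := by
    rw [← tupleExponent_apply, ← tupleExponent_apply, h]
  exact ⟨Equiv.ofFiberEquiv fun c => (Finite.card_eq.1 (card_fiber_eq c)).some,
    funext fun j => Equiv.ofFiberEquiv_map _ j⟩

end Tuples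

section HomogeneousPolynomials

variable {R ι N : Type*} [CommSemiring R] [AddCommMonoid N] [Module R N] {n d : ℕ}

variable (R ι n) in
lemma homogeneousSubmodule_eq_span_prod_X :
    homogeneousSubmodule ι R n =
      Submodule.span R (Set.range fun i : Fin n → ι => ∏ j, (X (i j) : MvPolynomial ι R)) := by
  rw [← homogeneousSubmodule_one_pow, homogeneousSubmodule_one_eq_span_X, Submodule.span_pow]
  congr 1
  ext p
  simp only [Set.mem_pow_iff_prod, Set.mem_range]
  constructor
  · rintro ⟨q, hq, rfl⟩
    choose i hi using hq
    exact ⟨i, Finset.prod_congr rfl fun j _ => hi j⟩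
  · rintro ⟨i, rfl⟩
    exact ⟨fun j => X (i j), fun j => ⟨i j, rfl⟩, rfl⟩

lemma linearMap_eq_of_isHomogeneous {f g : MvPolynomial ι R →ₗ[R] N}
    (h : ∀ i : Fin n → ι, f (∏ j, X (i j)) = g (∏ j, X (i j)))
    {p : MvPolynomial ι R} (hp : p.IsHomogeneous n) : f p = g p := by
  rw [← mem_homogeneousSubmodule, homogeneousSubmodule_eq_span_prod_X] at hp
  refine LinearMap.eqOn_span ?_ hp
  rintro _ ⟨i, rfl⟩
  exact h i

lemma homogeneousComponent_add_mul (p : MvPolynomial ι R) {q : MvPolynomial ι R}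
    (hq : q.IsHomogeneous d) :
    homogeneousComponent (n + d) (p * q) = homogeneousComponent n p * q := by
  induction p using MvPolynomial.induction_on' with
  | monomial u a =>
    have hu : (monomial u a).IsHomogeneous u.degree := isHomogeneous_monomial a rfl
    simp only [homogeneousComponent_of_mem hu, homogeneousComponent_of_mem (hu.mul hq),
      add_left_inj, ite_mul, zero_mul]
  | add p p' ihp ihp' => simp only [add_mul, map_add, ihp, ihp']

lemma homogeneousComponent_add_mem_mul {K : Submodule R (MvPolynomial ι R)}
    (hK : K ≤ homogeneousSubmodule ι R d) {p : MvPolynomial ι R}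
    (hp : p ∈ Ideal.span (K : Set (MvPolynomial ι R))) :
    homogeneousComponent (n + d) p ∈ homogeneousSubmodule ι R n * K := by
  induction hp using Submodule.closure_induction with
  | zero => simp
  | add p q _ _ ihp ihq => simpa only [map_add] using add_mem ihp ihq
  | smul_mem r q hq =>
    rw [smul_eq_mul, homogeneousComponent_add_mul r (hK hq)]
    exact Submodule.mul_mem_mul (homogeneousComponent_isHomogeneous n r) hq

end HomogeneousPolynomials

section LinearForms

variable {R ι : Type*} [CommSemiring R]

/-- The linear form `∑ aᵢXᵢ` with coefficient vector `a`. -/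
noncomputable def linearForm : (ι →₀ R) →ₗ[R] MvPolynomial ι R :=
  Finsupp.linearCombination R X

lemma linearForm_single_one (i : ι) : linearForm (Finsupp.single i (1 : R)) = X i := by
  simp [linearForm]

lemma range_linearForm : LinearMap.range (linearForm (R := R)) = homogeneousSubmodule ι R 1 := by
  rw [linearForm, Finsupp.range_linearCombination, homogeneousSubmodule_one_eq_span_X]

lemma linearForm_isHomogeneous (a : ι →₀ R) : (linearForm a).IsHomogeneous 1 := by
  rw [← mem_homogeneousSubmodule, ← range_linearForm]
  exact LinearMap.mem_range_self _ a

end LinearForms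

section SymmetricMultilinearMaps

variable {R ι M N : Type*} [CommSemiring R] [AddCommMonoid M] [Module R M] [AddCommMonoid N]
  [Module R N] {n : ℕ}

/-- The value of a symmetric `n`-linear map `f` on polynomials: the linear map sending
`X_{i₁}⋯X_{iₙ}` to `f (m_{i₁}, …, m_{iₙ})` and the monomials of degree other than `n` to `0`.
If `f` is not symmetric, `Function.extend` picks an arbitrary ordering of each monomial. -/
noncomputable def symmetricEval (f : MultilinearMap R (fun _ : Fin n => M) N) (m : ι → M) :
    MvPolynomial ι R →ₗ[R] N :=
  (basisMonomials ι R).constr R (Function.extend tupleExponent (fun i => f (m ∘ i)) 0)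

variable {f : MultilinearMap R (fun _ : Fin n => M) N} (m : ι → M)

lemma symmetricEval_prod_X (hf : ∀ (v : Fin n → M) (σ : Equiv.Perm (Fin n)), f (v ∘ σ) = f v)
    (i : Fin n → ι) : symmetricEval f m (∏ j, X (i j)) = f (m ∘ i) := by
  have factors : (fun i : Fin n → ι => f (m ∘ i)).FactorsThrough tupleExponent := by
    intro i k hik
    obtain ⟨σ, rfl⟩ := exists_perm_comp_eq_of_tupleExponent_eq hik
    exact hf (m ∘ k) σ
  calc symmetricEval f m (∏ j, X (i j))
      = symmetricEval f m (basisMonomials ι R (tupleExponent i)) := by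
        rw [prod_X_eq_monomial_tupleExponent, coe_basisMonomials]
    _ = f (m ∘ i) := by
        rw [symmetricEval, Module.Basis.constr_basis, factors.extend_apply]

lemma symmetricEval_prod_linearForm
    (hf : ∀ (v : Fin n → M) (σ : Equiv.Perm (Fin n)), f (v ∘ σ) = f v) (a : Fin n → ι →₀ R) :
    symmetricEval f m (∏ j, linearForm (a j)) =
      f fun j => Finsupp.linearCombination R m (a j) := by
  have key : (symmetricEval f m).compMultilinearMap
      ((MultilinearMap.mkPiAlgebra R (Fin n) (MvPolynomial ι R)).compLinearMap
        fun _ => linearForm) =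
      f.compLinearMap fun _ => Finsupp.linearCombination R m := by
    refine Module.Basis.ext_multilinear (fun _ => Finsupp.basisSingleOne) fun i => ?_
    simpa [linearForm_single_one, Function.comp_def] using symmetricEval_prod_X m hf i
  exact congrArg (fun g => g a) key

end SymmetricMultilinearMaps

section RelationIdeal

variable {R ι M : Type*} [CommRing R] [AddCommGroup M] [Module R M]

lemma exists_linearMap_comp_eq_of_ker_le {P N : Type*} [AddCommGroup P] [Module R P]
    [AddCommGroup N] [Module R N] {f : P →ₗ[R] M} (hf : Function.Surjective f) {g : P →ₗ[R] N}
    (h : LinearMap.ker f ≤ LinearMap.ker g) : ∃ k : M →ₗ[R] N, k ∘ₗ f = g := by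
  refine ⟨(LinearMap.ker f).liftQ g h ∘ₗ (f.quotKerEquivOfSurjective hf).symm.toLinearMap, ?_⟩
  ext p
  simp

variable (R) in
/-- The linear forms `∑ aᵢXᵢ` coming from the relations `∑ aᵢmᵢ = 0` of the family `m`. -/
noncomputable def linearRelations (m : ι → M) : Submodule R (MvPolynomial ι R) :=
  (LinearMap.ker (Finsupp.linearCombination R m)).map linearForm

lemma linearRelations_le (m : ι → M) : linearRelations R m ≤ homogeneousSubmodule ι R 1 := by
  rintro _ ⟨a, -, rfl⟩
  exact linearForm_isHomogeneous a

variable (R) in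
/-- The ideal `J` generated by the linear relations of `m`, so that `R[X]/J` is the symmetric
algebra of the module generated by `m`. -/
noncomputable def relationIdeal (m : ι → M) : Ideal (MvPolynomial ι R) :=
  Ideal.span (linearRelations R m : Set (MvPolynomial ι R))

lemma exists_linearMap_apply_eq_mk_X {m : ι → M} (hm : Submodule.span R (Set.range m) = ⊤) :
    ∃ k : M →ₗ[R] MvPolynomial ι R ⧸ relationIdeal R m,
      ∀ i, k (m i) = Ideal.Quotient.mkₐ R (relationIdeal R m) (X i) := by
  have surjective : Function.Surjective (Finsupp.linearCombination R m) := by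
    rw [← LinearMap.range_eq_top, Finsupp.range_linearCombination, hm]
  obtain ⟨k, hk⟩ := exists_linearMap_comp_eq_of_ker_le surjective
    (g := (Ideal.Quotient.mkₐ R (relationIdeal R m)).toLinearMap ∘ₗ linearForm) fun a ha =>
      Ideal.Quotient.eq_zero_iff_mem.2 (Ideal.subset_span ⟨a, ha, rfl⟩)
  refine ⟨k, fun i => ?_⟩
  simpa [linearForm_single_one] using LinearMap.congr_fun hk (Finsupp.single i 1)

end RelationIdeal

section SymmetricPowers

variable {R : Type*} [CommRing R] {I : Ideal R} {n : ℕ}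

/-- The symmetric product `(v₁, …, vₙ) ↦ v₁⋯vₙ` with values in `Symₙ(I)`. -/
noncomputable def symProd (I : Ideal R) (n : ℕ) :
    MultilinearMap R (fun _ : Fin n => I) (SymPow R I n) :=
  (symRel R I n).mkQ.compMultilinearMap (tprod R)

lemma symProd_comp_perm (v : Fin n → I) (σ : Equiv.Perm (Fin n)) :
    symProd I n (v ∘ σ) = symProd I n v := by
  have mem : tprod R v - tprod R (v ∘ σ) ∈ symRel R I n := Submodule.subset_span ⟨v, σ, rfl⟩
  exact ((Submodule.Quotient.eq _).2 mem).symm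

lemma span_range_symProd : Submodule.span R (Set.range (symProd I n)) = ⊤ := by
  have : Set.range (symProd I n) = (symRel R I n).mkQ '' Set.range (tprod R) := by
    rw [← Set.range_comp]
    rfl
  rw [this, ← Submodule.map_span, PiTensorProduct.span_tprod_eq_top, Submodule.map_top,
    Submodule.range_mkQ]

lemma alphaCan_symProd (v : Fin n → I) : alphaCan R I n (symProd I n v) = ∏ j, (v j : R) :=
  PiTensorProduct.lift.tprod (φ := prodML R I n) v

lemma exists_linearMap_symProd_eq {N : Type*} [AddCommGroup N] [Module R N]
    {f : MultilinearMap R (fun _ : Fin n => I) N}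
    (hf : ∀ (v : Fin n → I) (σ : Equiv.Perm (Fin n)), f (v ∘ σ) = f v) :
    ∃ F : SymPow R I n →ₗ[R] N, ∀ v, F (symProd I n v) = f v := by
  have symRel_le : symRel R I n ≤ LinearMap.ker (PiTensorProduct.lift f) := by
    refine Submodule.span_le.2 ?_
    rintro _ ⟨v, σ, rfl⟩
    simp [hf v σ]
  exact ⟨(symRel R I n).liftQ _ symRel_le, fun v => PiTensorProduct.lift.tprod v⟩

variable {ι : Type*} {y : ι → I}

lemma map_symmetricEval_symProd (hy : Submodule.span R (Set.range y) = ⊤) :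
    (homogeneousSubmodule ι R n).map (symmetricEval (symProd I n) y) = ⊤ := by
  rw [eq_top_iff, ← span_range_symProd, Submodule.span_le]
  rintro _ ⟨v, rfl⟩
  have mem_range (j : Fin n) : v j ∈ LinearMap.range (Finsupp.linearCombination R y) := by
    rw [Finsupp.range_linearCombination, hy]
    exact Submodule.mem_top
  choose a ha using mem_range
  refine ⟨∏ j, linearForm (a j), ?_, ?_⟩
  · simpa using IsHomogeneous.prod Finset.univ (fun j => linearForm (a j)) (fun _ => 1)
      fun j _ => linearForm_isHomogeneous (a j)
  · rw [symmetricEval_prod_linearForm y symProd_comp_perm, funext ha]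

lemma alphaCan_symmetricEval {p : MvPolynomial ι R} (hp : p.IsHomogeneous n) :
    alphaCan R I n (symmetricEval (symProd I n) y p) = aeval (fun i => (y i : R)) p := by
  refine linearMap_eq_of_isHomogeneous (f := alphaCan R I n ∘ₗ symmetricEval (symProd I n) y)
    (g := (aeval fun i => (y i : R)).toLinearMap) (fun i => ?_) hp
  simp [symmetricEval_prod_X y symProd_comp_perm, alphaCan_symProd]

lemma mul_linearRelations_le_ker_symmetricEval (n : ℕ) (y : ι → I) :
    homogeneousSubmodule ι R n * linearRelations R y ≤
      LinearMap.ker (symmetricEval (symProd I (n + 1)) y) := by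
  rw [Submodule.mul_le]
  rintro p hp _ ⟨a, ha, rfl⟩
  refine linearMap_eq_of_isHomogeneous (g := 0)
    (f := symmetricEval (symProd I (n + 1)) y ∘ₗ LinearMap.mulRight R (linearForm a))
    (fun i => ?_) hp
  let b : Fin (n + 1) → ι →₀ R := Fin.cons a fun j => Finsupp.single (i j) 1
  have prod_eq : (∏ j, X (i j)) * linearForm a = ∏ j, linearForm (b j) := by
    simp [b, Fin.prod_univ_succ, linearForm_single_one, mul_comm]
  rw [LinearMap.comp_apply, LinearMap.mulRight_apply, prod_eq,
    symmetricEval_prod_linearForm y symProd_comp_perm]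
  exact (symProd I (n + 1)).map_coord_zero 0 ha

lemma mem_relationIdeal_of_symmetricEval_eq_zero (hy : Submodule.span R (Set.range y) = ⊤)
    {p : MvPolynomial ι R} (hp : p.IsHomogeneous n)
    (h : symmetricEval (symProd I n) y p = 0) : p ∈ relationIdeal R y := by
  obtain ⟨k, hk⟩ := exists_linearMap_apply_eq_mk_X hy
  let A := MvPolynomial ι R ⧸ relationIdeal R y
  obtain ⟨F, hF⟩ := exists_linearMap_symProd_eq (n := n)
    (f := (MultilinearMap.mkPiAlgebra R (Fin n) A).compLinearMap fun _ => k)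
    fun v σ => Equiv.prod_comp σ fun j => k (v j)
  have F_symmetricEval : F (symmetricEval (symProd I n) y p) =
      Ideal.Quotient.mkₐ R (relationIdeal R y) p := by
    refine linearMap_eq_of_isHomogeneous (f := F ∘ₗ symmetricEval (symProd I n) y)
      (g := (Ideal.Quotient.mkₐ R (relationIdeal R y)).toLinearMap) (fun i => ?_) hp
    simp [symmetricEval_prod_X y symProd_comp_perm, hF, hk]
  rw [h, map_zero] at F_symmetricEval
  exact Ideal.Quotient.eq_zero_iff_mem.1 F_symmetricEval.symm

lemma symmetricEval_eq_zero_iff (hy : Submodule.span R (Set.range y) = ⊤)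
    {p : MvPolynomial ι R} (hp : p.IsHomogeneous (n + 1)) :
    symmetricEval (symProd I (n + 1)) y p = 0 ↔
      p ∈ homogeneousSubmodule ι R n * linearRelations R y := by
  refine ⟨fun h => ?_, fun h => mul_linearRelations_le_ker_symmetricEval n y h⟩
  rw [← homogeneousComponent_eq_self hp]
  exact homogeneousComponent_add_mem_mul (linearRelations_le y)
    (mem_relationIdeal_of_symmetricEval_eq_zero hy hp h)

end SymmetricPowers

section ReesPresentation

variable {R : Type*} [CommRing R] {s n : ℕ}

lemma reesPres_of_isHomogeneous (x : Fin s → R) {p : MvPolynomial (Fin s) R}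
    (hp : p.IsHomogeneous n) : reesPres x p = Polynomial.monomial n (aeval x p) := by
  refine linearMap_eq_of_isHomogeneous (f := (reesPres x).toLinearMap)
    (g := Polynomial.monomial n ∘ₗ (aeval x).toLinearMap) (fun i => ?_) hp
  simp [reesPres, Finset.prod_mul_distrib, ← Polynomial.C_mul_X_pow_eq_monomial]

lemma mem_presKerHomog_iff (x : Fin s → R) {p : MvPolynomial (Fin s) R} :
    p ∈ presKerHomog x n ↔ p.IsHomogeneous n ∧ aeval x p = 0 := by
  refine and_congr_right fun hp => ?_
  exact (congrArg (· = 0) (reesPres_of_isHomogeneous x hp)).to_iff.trans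
    (Polynomial.monomial_eq_zero_iff _ n)

lemma linMul_succ (x : Fin s → R) (n : ℕ) :
    linMul x (n + 1) = homogeneousSubmodule (Fin s) R n * presKerHomog x 1 := by
  rw [Submodule.mul_eq_span_mul_set, linMul]
  congr 1
  ext p
  constructor
  · rintro ⟨B, G, hB, hG, hG_one, rfl⟩
    exact Set.mul_mem_mul hB ⟨hG_one, hG⟩
  · rintro ⟨B, hB, G, ⟨hG_one, hG⟩, rfl⟩
    exact ⟨B, G, hB, hG, hG_one, rfl⟩

variable {I : Ideal R}

lemma presKerHomog_one (y : Fin s → I) :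
    presKerHomog (fun i => (y i : R)) 1 = linearRelations R y := by
  have aeval_linearForm (a : Fin s →₀ R) :
      aeval (fun i => (y i : R)) (linearForm a) = Finsupp.linearCombination R y a := by
    simp [linearForm, Finsupp.linearCombination_apply, Finsupp.sum]
  ext p
  rw [mem_presKerHomog_iff, ← mem_homogeneousSubmodule, ← range_linearForm]
  constructor
  · rintro ⟨⟨a, rfl⟩, ha⟩
    exact ⟨a, Subtype.ext ((aeval_linearForm a).symm.trans ha), rfl⟩
  · rintro ⟨a, ha, rfl⟩
    exact ⟨⟨a, rfl⟩, (aeval_linearForm a).trans (congrArg Subtype.val ha)⟩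

lemma mem_presKerHomog_iff_symmetricEval_mem_ker {y : Fin s → I} {p : MvPolynomial (Fin s) R}
    (hp : p.IsHomogeneous n) : p ∈ presKerHomog (fun i => (y i : R)) n ↔
      symmetricEval (symProd I n) y p ∈ LinearMap.ker (alphaCan R I n) := by
  rw [mem_presKerHomog_iff, LinearMap.mem_ker, alphaCan_symmetricEval hp, and_iff_right hp]

lemma span_range_eq_top_of_eq_span {ι : Type*} {y : ι → I}
    (hI : I = Ideal.span (Set.range fun i => (y i : R))) :
    Submodule.span R (Set.range y) = ⊤ := by
  refine Submodule.map_injective_of_injective I.subtype_injective ?_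
  rw [Submodule.map_span, Submodule.map_top, Submodule.range_subtype, ← Set.range_comp]
  exact hI.symm

/-- The map `ker φₙ → ker α_{I,n}` induced by `Xᵢ ↦ yᵢ`, for elements `yᵢ` of `I`. -/
noncomputable def presKerHomogToKerAlpha (y : Fin s → I) (n : ℕ) :
    presKerHomog (fun i => (y i : R)) n →ₗ[R] LinearMap.ker (alphaCan R I n) :=
  (symmetricEval (symProd I n) y).restrict fun _ hp =>
    (mem_presKerHomog_iff_symmetricEval_mem_ker hp.1).1 hp

variable {y : Fin s → I}

lemma presKerHomogToKerAlpha_surjective (hy : Submodule.span R (Set.range y) = ⊤) :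
    Function.Surjective (presKerHomogToKerAlpha y n) := by
  rintro ⟨z, hz⟩
  obtain ⟨p, hp, rfl⟩ : z ∈ (homogeneousSubmodule (Fin s) R n).map _ :=
    map_symmetricEval_symProd hy ▸ Submodule.mem_top
  exact ⟨⟨p, (mem_presKerHomog_iff_symmetricEval_mem_ker hp).2 hz⟩, rfl⟩

lemma ker_presKerHomogToKerAlpha_succ (hy : Submodule.span R (Set.range y) = ⊤) :
    LinearMap.ker (presKerHomogToKerAlpha y (n + 1)) =
      (linMul (fun i => (y i : R)) (n + 1)).comap (presKerHomog _ (n + 1)).subtype := by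
  rw [presKerHomogToKerAlpha, LinearMap.ker_restrict, linMul_succ, presKerHomog_one]
  ext ⟨p, hp⟩
  exact symmetricEval_eq_zero_iff hy hp.1

end ReesPresentation

/-- For `I = (x₁,…,xₛ)` presented by `φ : V = R[X₁,…,Xₛ] → R(I)`, `Xᵢ ↦ xᵢt`, for every
`n ≥ 2` there is an isomorphism of `R`-modules
`ker(α_{I,n}) ≅ ker(φₙ)/(V_{n-1}·ker(φ₁))`. -/
theorem statement11 {R : Type*} [CommRing R] {s : ℕ} (x : Fin s → R)
    (I : Ideal R) (hI : I = Ideal.span (Set.range x)) :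
    ∀ n, 2 ≤ n →
      Nonempty ((LinearMap.ker (alphaCan R I n)) ≃ₗ[R]
        (presKerHomog x n ⧸
          Submodule.comap (presKerHomog x n).subtype (linMul x n))) := by
  intro n hn
  obtain ⟨k, rfl⟩ := Nat.exists_eq_add_of_le' (one_le_two.trans hn)
  lift x to Fin s → I using fun i => hI ▸ Ideal.subset_span ⟨i, rfl⟩
  have hx : Submodule.span R (Set.range x) = ⊤ := span_range_eq_top_of_eq_span hI
  rw [← ker_presKerHomogToKerAlpha_succ hx]
  exact ⟨(LinearMap.quotKerEquivOfSurjective _ (presKerHomogToKerAlpha_surjective hx)).symm⟩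
end

section
/- Let R be a commutative ring and let I = (x,y) be a two-generated ideal. Then for every n ≥ 2 there is a short exact sequence of R-modules 0 → ((0 : x) ∩ I^{n-1}) / (y·((0 : x) ∩ I^{n-2})) → E(I)_n → (xI^{n-1} : y^n)/(xI^{n-2} : y^{n-1}) → 0. -/
open scoped TensorProduct
open PiTensorProduct

section EDefs

variable (R : Type*) [CommRing R]

/-- "Multiplication by `x`" map on tensor powers: `w ↦ x ⊗ w`. -/
noncomputable def consMap (I : Ideal R) (n : ℕ) (x : ↥I) :
    TensPow R I n →ₗ[R] TensPow R I (n + 1) :=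
  PiTensorProduct.lift
    ((PiTensorProduct.tprod R (s := fun _ : Fin (n + 1) => ↥I)).curryLeft x)

/-- The submodule `Sym₁(I)·ker(α_{I,n}) ⊆ Sym_{n+1}(I)`. -/
noncomputable def symOneMulKer (I : Ideal R) (n : ℕ) : Submodule R (SymPow R I (n + 1)) :=
  Submodule.span R {z | ∃ (x : ↥I) (w : TensPow R I n),
    (Submodule.Quotient.mk w : SymPow R I n) ∈ LinearMap.ker (alphaCan R I n) ∧
    z = Submodule.Quotient.mk (consMap R I n x w)}

/-- The module of effective relations `E(I)_{n+1} = ker(α_{I,n+1})/Sym₁(I)·ker(α_{I,n})`. -/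
abbrev EffRel (I : Ideal R) (n : ℕ) : Type _ :=
  LinearMap.ker (alphaCan R I (n + 1)) ⧸
    Submodule.comap (LinearMap.ker (alphaCan R I (n + 1))).subtype (symOneMulKer R I n)

end EDefs

section AuxDefs

variable {R : Type*} [CommRing R]

/-- The ideal `(0 : x) ∩ Iᵐ`. -/
noncomputable def annCapPow (x : R) (I : Ideal R) (m : ℕ) : Ideal R :=
  (⊥ : Ideal R).colon (Ideal.span {x}) ⊓ I ^ m

/-- The colon ideal `(xIᵐ : yᵏ)`. -/
noncomputable def colonPow (x y : R) (I : Ideal R) (m k : ℕ) : Ideal R :=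
  (Ideal.span {x} * I ^ m).colon (Ideal.span {y ^ k})

end AuxDefs

/-!
Every element of `Symₙ₊₁(I)` has the form `x F + c yⁿ⁺¹`, and it lies in the kernel of `α` exactly
when `(α F, c)` belongs to `Zₙ = {(q, c) | q ∈ Iⁿ, q x + c yⁿ⁺¹ = 0}`.
The pair is not determined by the element, but the ambiguity is harmless: expanding a product
`∏ (aᵢ X + bᵢ Y)` as `X G + c Yⁿ⁺¹` and recording `(G(x, y), c)` shows that `x F + c yⁿ⁺¹ = 0`
forces `(α F, c) ∈ τⁿ Z₀`, where `τ (q, c) = (y q, c)` corresponds to multiplication by `y`.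
Hence `E(I)ₙ₊₁ ≅ Zₙ / τ Zₙ₋₁`, and the sequence is the quotient by `τ` of
`0 → (0 : x) ∩ Iⁿ → Zₙ → (x Iⁿ : yⁿ⁺¹) → 0`.
-/

section GeneralModules

variable {R M N P : Type*} [CommRing R] [AddCommGroup M] [Module R M] [AddCommGroup N] [Module R N]
  [AddCommGroup P] [Module R P]

theorem multilinearMap_apply_eq_of_comp_eq {ι : Type*} [Finite ι] (π : M →ₗ[R] N)
    (g : MultilinearMap R (fun _ : ι => M) P) (hg : ∀ v i, π (v i) = 0 → g v = 0)
    {v w : ι → M} (hvw : π ∘ v = π ∘ w) : g v = g w := by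
  classical
  have := Fintype.ofFinite ι
  suffices h : ∀ s : Finset ι, g (s.piecewise v w) = g w by
    simpa using h Finset.univ
  intro s
  induction s using Finset.induction_on with
  | empty => simp
  | insert j s hj ih =>
    rw [Finset.piecewise_insert, ← ih, ← sub_eq_zero]
    nth_rw 2 [← Function.update_eq_self j (s.piecewise v w)]
    rw [← g.map_update_sub]
    refine hg _ j ?_
    simpa [hj, sub_eq_zero] using congrFun hvw j

theorem exists_multilinearMap_compLinearMap_eq {ι : Type*} [Finite ι] {π : M →ₗ[R] N}
    (hπ : Function.Surjective π) (g : MultilinearMap R (fun _ : ι => M) P)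
    (hg : ∀ v i, π (v i) = 0 → g v = 0) :
    ∃ h : MultilinearMap R (fun _ : ι => N) P, h.compLinearMap (fun _ => π) = g := by
  obtain ⟨s, hs⟩ := hπ.hasRightInverse
  have comp_update [DecidableEq ι] (v : ι → N) (i : ι) (z : N) (u : M) (hu : π u = z) :
      g (s ∘ Function.update v i z) = g (Function.update (s ∘ v) i u) := by
    refine multilinearMap_apply_eq_of_comp_eq π g hg (funext fun j => ?_)
    rcases eq_or_ne j i with rfl | hj
    · simp [hs _, hu]
    · simp [hj]
  refine ⟨{ toFun v := g (s ∘ v), map_update_add' := ?_, map_update_smul' := ?_ }, ?_⟩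
  · intro inst v i a b
    rw [comp_update v i (a + b) (s a + s b) (by simp [hs _]), comp_update v i a _ (hs a),
      comp_update v i b _ (hs b), g.map_update_add]
  · intro inst v i r a
    rw [comp_update v i (r • a) (r • s a) (by simp [hs _]), comp_update v i a _ (hs a),
      g.map_update_smul]
  · ext v
    exact multilinearMap_apply_eq_of_comp_eq π g hg (funext fun i => hs (π (v i)))

theorem nonempty_subquotient_linearEquiv (f : P →ₗ[R] M) (g : P →ₗ[R] N) {K S : Submodule R M}
    {Z B : Submodule R N} (hK : K ≤ LinearMap.range f) (hZ : Z ≤ LinearMap.range g)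
    (hKZ : K.comap f = Z.comap g) (hSB : S.comap f = B.comap g) :
    Nonempty ((K ⧸ S.comap K.subtype) ≃ₗ[R] (Z ⧸ B.comap Z.subtype)) := by
  let fK : K.comap f →ₗ[R] K ⧸ S.comap K.subtype :=
    (S.comap K.subtype).mkQ ∘ₗ f.restrict fun _ h => h
  let gZ : K.comap f →ₗ[R] Z ⧸ B.comap Z.subtype :=
    (B.comap Z.subtype).mkQ ∘ₗ g.restrict fun _ h => hKZ.le h
  have fK_surjective : Function.Surjective fK := by
    refine (Submodule.mkQ_surjective _).comp ?_
    rintro ⟨_, hm⟩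
    obtain ⟨p, rfl⟩ := hK hm
    exact ⟨⟨p, hm⟩, rfl⟩
  have gZ_surjective : Function.Surjective gZ := by
    refine (Submodule.mkQ_surjective _).comp ?_
    rintro ⟨_, hn⟩
    obtain ⟨p, rfl⟩ := hZ hn
    exact ⟨⟨p, hKZ.ge hn⟩, rfl⟩
  have ker_eq : LinearMap.ker fK = LinearMap.ker gZ := by
    ext p
    simpa [fK, gZ] using SetLike.ext_iff.1 hSB (p : P)
  exact ⟨(fK.quotKerEquivOfSurjective fK_surjective).symm ≪≫ₗ
    Submodule.quotEquivOfEq _ _ ker_eq ≪≫ₗ gZ.quotKerEquivOfSurjective gZ_surjective⟩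

/-- The map `(a, b) ↦ a x + b y` presenting a module generated by `x` and `y`; its kernel is the
module of linear syzygies. -/
def pairCombination (x y : M) : R × R →ₗ[R] M :=
  (LinearMap.toSpanSingleton R M x).coprod (LinearMap.toSpanSingleton R M y)

@[simp]
theorem pairCombination_apply (x y : M) (p : R × R) :
    pairCombination x y p = p.1 • x + p.2 • y := by
  simp [pairCombination]

theorem pairCombination_surjective {x y : M} (hxy : Submodule.span R {x, y} = ⊤) :
    Function.Surjective (pairCombination (R := R) x y) := fun z => by
  obtain ⟨a, b, hab⟩ := Submodule.mem_span_pair.1 (hxy ▸ Submodule.mem_top : z ∈ _)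
  exact ⟨(a, b), by simpa using hab⟩

end GeneralModules

namespace SymPow

variable {R : Type*} [CommRing R] {I : Ideal R} {n : ℕ}

/-- The symmetric product `v₁ ⋯ vₙ` in `Symₙ(I)`. -/
noncomputable def mk (v : Fin n → I) : SymPow R I n :=
  Submodule.Quotient.mk (tprod R v)

theorem span_range_mk : Submodule.span R (Set.range (mk (I := I) (n := n))) = ⊤ := by
  have range_mk : Set.range (mk (I := I) (n := n)) =
      (symRel R I n).mkQ '' Set.range (tprod R) := (Set.range_comp _ _)
  rw [range_mk, Submodule.span_image, PiTensorProduct.span_tprod_eq_top, Submodule.map_top,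
    Submodule.range_mkQ]

theorem linearMap_ext {M : Type*} [AddCommGroup M] [Module R M] {f g : SymPow R I n →ₗ[R] M}
    (h : ∀ v, f (mk v) = g (mk v)) : f = g :=
  LinearMap.ext_on_range span_range_mk h

theorem mk_comp_perm (v : Fin n → I) (σ : Equiv.Perm (Fin n)) : mk (v ∘ σ) = mk v :=
  .symm <| (Submodule.Quotient.eq (symRel R I n)).2 <| Submodule.subset_span ⟨v, σ, rfl⟩

theorem exists_linearMap_apply_mk {M : Type*} [AddCommGroup M] [Module R M]
    (f : MultilinearMap R (fun _ : Fin n => I) M)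
    (hf : ∀ (v : Fin n → I) (σ : Equiv.Perm (Fin n)), f (v ∘ σ) = f v) :
    ∃ F : SymPow R I n →ₗ[R] M, ∀ v, F (mk v) = f v := by
  refine ⟨(symRel R I n).liftQ (PiTensorProduct.lift f) ?_, fun v => lift.tprod v⟩
  rw [symRel, Submodule.span_le]
  rintro _ ⟨v, σ, rfl⟩
  simp [hf]

@[simp]
theorem alphaCan_mk (v : Fin n → I) : alphaCan R I n (mk v) = ∏ i, (v i : R) := by
  change PiTensorProduct.lift (prodML R I n) (tprod R v) = _
  simp [prodML]

theorem consMap_tprod (u : I) (v : Fin n → I) :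
    consMap R I n u (tprod R v) = tprod R (Fin.cons u v : Fin (n + 1) → I) := by
  simp [consMap, MultilinearMap.curryLeft_apply]

theorem symRel_le_comap_consMap (u : I) :
    symRel R I n ≤ (symRel R I (n + 1)).comap (consMap R I n u) := by
  rw [symRel, Submodule.span_le]
  rintro _ ⟨v, σ, rfl⟩
  rw [SetLike.mem_coe, Submodule.mem_comap, map_sub, consMap_tprod, consMap_tprod]
  refine Submodule.subset_span ⟨Fin.cons u v, Equiv.Perm.decomposeFin.symm (0, σ), ?_⟩
  congr 2
  funext i
  cases i using Fin.cases <;> simp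

/-- Multiplication `Sym₁(I) × Symₙ(I) → Symₙ₊₁(I)`, induced by `consMap`. -/
noncomputable def cons (n : ℕ) : I →ₗ[R] SymPow R I n →ₗ[R] SymPow R I (n + 1) where
  toFun u := Submodule.mapQ _ _ (consMap R I n u) (symRel_le_comap_consMap u)
  map_add' u v := by
    ext w
    simp [consMap]
  map_smul' r u := by
    ext w
    simp [consMap]

theorem cons_quotient_mk (u : I) (w : TensPow R I n) :
    cons n u (Submodule.Quotient.mk w) = Submodule.Quotient.mk (consMap R I n u w) :=
  rfl

@[simp]
theorem cons_mk (u : I) (v : Fin n → I) : cons n u (mk v) = mk (Fin.cons u v) := by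
  rw [mk, cons_quotient_mk, consMap_tprod, mk]

theorem cons_comm (u v : I) (z : SymPow R I n) :
    cons (n + 1) u (cons n v z) = cons (n + 1) v (cons n u z) := by
  suffices h : cons (n + 1) u ∘ₗ cons n v = cons (n + 1) v ∘ₗ cons n u from LinearMap.congr_fun h z
  refine linearMap_ext fun w => ?_
  simp only [LinearMap.comp_apply, cons_mk]
  rw [← mk_comp_perm _ (Equiv.swap 0 1)]
  congr 1
  funext i
  cases i using Fin.cases with
  | zero => simp
  | succ i =>
    cases i using Fin.cases with
    | zero => simp
    | succ i =>
      rw [Function.comp_apply, Equiv.swap_apply_of_ne_of_ne (Fin.succ_ne_zero _)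
        (Fin.succ_succ_ne_one _)]
      simp

@[simp]
theorem alphaCan_cons (u : I) (z : SymPow R I n) :
    alphaCan R I (n + 1) (cons n u z) = u * alphaCan R I n z := by
  suffices h : alphaCan R I (n + 1) ∘ₗ cons n u = LinearMap.mulLeft R (u : R) ∘ₗ alphaCan R I n from
    LinearMap.congr_fun h z
  exact linearMap_ext fun v => by simp [Fin.prod_univ_succ]

theorem range_alphaCan : LinearMap.range (alphaCan R I n) = I ^ n := by
  apply le_antisymm
  · rw [← Submodule.map_top, ← span_range_mk, Submodule.map_span_le]
    rintro _ ⟨v, rfl⟩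
    simpa using Ideal.prod_mem_prod (s := Finset.univ) fun i _ => (v i).2
  · induction n with
    | zero =>
      rintro r -
      exact ⟨r • mk Fin.elim0, by simp⟩
    | succ n ih =>
      rw [pow_succ', Ideal.mul_le]
      intro u hu s hs
      obtain ⟨z, rfl⟩ := ih hs
      exact ⟨cons n ⟨u, hu⟩ z, alphaCan_cons _ z⟩

/-- The power `vⁿ` in `Symₙ(I)`. -/
noncomputable def npow (v : I) (n : ℕ) : SymPow R I n :=
  mk fun _ => v

@[simp]
theorem cons_npow (v : I) (n : ℕ) : cons n v (npow v n) = npow v (n + 1) := by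
  rw [npow, cons_mk, npow]
  congr 1
  funext i
  cases i using Fin.cases <;> rfl

@[simp]
theorem alphaCan_npow (v : I) (n : ℕ) : alphaCan R I n (npow v n) = (v : R) ^ n := by
  simp [npow]

/-- The map `(F, c) ↦ x F + c yⁿ⁺¹` from `Symₙ(I) × R` to `Symₙ₊₁(I)`, used to describe
elements of the symmetric power of an ideal generated by `x` and `y`. -/
noncomputable def consAddNPow (x y : I) (n : ℕ) : SymPow R I n × R →ₗ[R] SymPow R I (n + 1) :=
  (cons n x).coprod (LinearMap.toSpanSingleton R _ (npow y (n + 1)))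

@[simp]
theorem consAddNPow_apply (x y : I) (p : SymPow R I n × R) :
    consAddNPow x y n p = cons n x p.1 + p.2 • npow y (n + 1) := by
  simp [consAddNPow]

theorem cons_consAddNPow (x y : I) (F : SymPow R I n) (c : R) :
    cons (n + 1) y (consAddNPow x y n (F, c)) = consAddNPow x y (n + 1) (cons n y F, c) := by
  simp [cons_comm y x]

section TwoGenerators

variable {x y : I} (hxy : Submodule.span R {x, y} = ⊤)
include hxy

theorem cons_mem_range_consAddNPow {z : SymPow R I n}
    (hz : cons n y z ∈ LinearMap.range (consAddNPow x y n)) (v : I) :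
    cons n v z ∈ LinearMap.range (consAddNPow x y n) := by
  obtain ⟨p, rfl⟩ := pairCombination_surjective hxy v
  have hx : cons n x z ∈ LinearMap.range (consAddNPow x y n) := ⟨(z, 0), by simp⟩
  simpa using add_mem (Submodule.smul_mem _ p.1 hx) (Submodule.smul_mem _ p.2 hz)

theorem consAddNPow_surjective (n : ℕ) : Function.Surjective (consAddNPow x y n) := by
  rw [← LinearMap.range_eq_top, ← top_le_iff, ← span_range_mk, Submodule.span_le]
  rintro _ ⟨v, rfl⟩
  rw [← Fin.cons_self_tail v, ← cons_mk]
  refine cons_mem_range_consAddNPow hxy ?_ (v 0)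
  cases n with
  | zero =>
    rw [Subsingleton.elim (Fin.tail v) fun _ => y, ← npow, cons_npow]
    exact ⟨(0, 1), by simp⟩
  | succ n =>
    obtain ⟨⟨F, c⟩, hFc⟩ := consAddNPow_surjective n (mk (Fin.tail v))
    exact ⟨(cons n y F, c), by rw [← hFc, cons_consAddNPow]⟩

theorem symOneMulKer_eq_sup (n : ℕ) :
    symOneMulKer R I n = (LinearMap.ker (alphaCan R I n)).map (cons n x) ⊔
      (LinearMap.ker (alphaCan R I n)).map (cons n y) := by
  apply le_antisymm
  · rw [symOneMulKer, Submodule.span_le]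
    rintro _ ⟨v, w, hw, rfl⟩
    obtain ⟨p, rfl⟩ := pairCombination_surjective hxy v
    rw [← cons_quotient_mk, pairCombination_apply, map_add, map_smul, map_smul]
    exact add_mem
      (Submodule.mem_sup_left (Submodule.smul_mem _ _ (Submodule.mem_map_of_mem hw)))
      (Submodule.mem_sup_right (Submodule.smul_mem _ _ (Submodule.mem_map_of_mem hw)))
  · have map_cons_le (v : I) :
        (LinearMap.ker (alphaCan R I n)).map (cons n v) ≤ symOneMulKer R I n := by
      rintro _ ⟨z, hz, rfl⟩
      obtain ⟨w, rfl⟩ := Submodule.Quotient.mk_surjective _ z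
      exact Submodule.subset_span ⟨v, w, hz, rfl⟩
    exact sup_le (map_cons_le x) (map_cons_le y)

end TwoGenerators

end SymPow

section RelationPairs

variable {R : Type*} [CommRing R]

/-- The pairs `(q, c)` with `q ∈ Iᵏ` and `x q + c yᵏ⁺¹ = 0`. They record the relations
`x F + c yᵏ⁺¹ ∈ ker α_{I,k+1}` through `q = α_{I,k}(F)`; for `k = 0` they are the linear syzygies
of `x, y`. -/
def relationPairs (x y : R) (I : Ideal R) (k : ℕ) : Submodule R (R × R) :=
  Submodule.comap (LinearMap.fst R R R) (I ^ k) ⊓ LinearMap.ker (pairCombination x (y ^ (k + 1)))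

theorem mem_relationPairs {x y : R} {I : Ideal R} {k : ℕ} {p : R × R} :
    p ∈ relationPairs x y I k ↔ p.1 ∈ I ^ k ∧ p.1 * x + p.2 * y ^ (k + 1) = 0 := by
  simp [relationPairs]

/-- The map `(q, c) ↦ (r q, c)`. For `r = y` it describes multiplication by `y` on relations:
`y (x F + c yᵏ) = x (y F) + c yᵏ⁺¹`. -/
def mulFst (r : R) : R × R →ₗ[R] R × R :=
  (LinearMap.mulLeft R r).prodMap LinearMap.id

@[simp]
theorem mulFst_apply (r : R) (p : R × R) : mulFst r p = (r * p.1, p.2) :=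
  rfl

theorem map_mulFst_pow_relationPairs_le {x y : R} {I : Ideal R} (hy : y ∈ I) (k n : ℕ) :
    (relationPairs x y I k).map (mulFst (y ^ n)) ≤ relationPairs x y I (k + n) := by
  rintro _ ⟨p, hp, rfl⟩
  rw [SetLike.mem_coe, mem_relationPairs] at hp
  refine mem_relationPairs.2 ⟨?_, ?_⟩
  · rw [mulFst_apply, mul_comm, pow_add]
    exact Ideal.mul_mem_mul hp.1 (Ideal.pow_mem_pow hy n)
  · rw [mulFst_apply]
    linear_combination y ^ n * hp.2

end RelationPairs

section SplitProduct

open Polynomial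

variable {R : Type*} [CommRing R]

/-- The linear form `a X + b Y` dehomogenised at `Y = y`. -/
noncomputable def linForm (y : R) : R × R →ₗ[R] R[X] :=
  pairCombination X (C y)

/-- The linear map `P ↦ ((P - P(0)) / X)(x)`. -/
noncomputable def evalDivX (x : R) : R[X] →ₗ[R] R where
  toFun P := P.divX.eval x
  map_add' P Q := by rw [divX_add, eval_add]
  map_smul' r P := by rw [smul_eq_C_mul, divX_C_mul, eval_C_mul, RingHom.id_apply, smul_eq_mul]

theorem coeff_zero_add_mul_evalDivX (x : R) (P : R[X]) :
    P.coeff 0 + x * evalDivX x P = P.eval x := by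
  calc P.coeff 0 + x * evalDivX x P = (X * P.divX + C (P.coeff 0)).eval x := by
        simp [evalDivX, add_comm, -X_mul_divX_add]
    _ = P.eval x := by rw [X_mul_divX_add]

theorem evalDivX_linForm_mul (x y : R) (p : R × R) (P : R[X]) :
    evalDivX x (linForm y p * P) =
      p.1 * P.coeff 0 + (p.1 * x + p.2 * y) * evalDivX x P := by
  have evalDivX_X_mul : evalDivX x (X * P) = P.eval x := by
    refine congrArg (eval x) (Polynomial.ext fun i => ?_)
    rw [coeff_divX, coeff_X_mul]
  have h : evalDivX x (linForm y p * P) = p.1 * P.eval x + p.2 * (y * evalDivX x P) := by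
    have expand : linForm y p * P = p.1 • (X * P) + p.2 • y • P := by
      simp [linForm, add_mul, smul_eq_C_mul, mul_assoc]
    rw [expand, map_add, map_smul, map_smul, map_smul, evalDivX_X_mul]
    rfl
  rw [h, ← coeff_zero_add_mul_evalDivX]
  ring

theorem coeff_zero_prod_linForm (y : R) {n : ℕ} (v : Fin n → R × R) :
    (∏ i, linForm y (v i)).coeff 0 = (∏ i, (v i).2) * y ^ n := by
  simp [coeff_zero_eq_eval_zero, eval_prod, linForm, Finset.prod_mul_distrib]

/-- Write `∏ᵢ (aᵢ X + bᵢ Y) = X G + c Yⁿ`; the value at `((aᵢ, bᵢ))ᵢ` is `(G(x, y), c)`. -/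
noncomputable def splitProd (x y : R) (n : ℕ) :
    MultilinearMap R (fun _ : Fin n => R × R) (R × R) :=
  ((evalDivX x).compMultilinearMap
    ((MultilinearMap.mkPiAlgebra R (Fin n) R[X]).compLinearMap fun _ => linForm y)).prod
    ((MultilinearMap.mkPiAlgebra R (Fin n) R).compLinearMap fun _ => LinearMap.snd R R R)

theorem splitProd_apply (x y : R) {n : ℕ} (v : Fin n → R × R) :
    splitProd x y n v = (evalDivX x (∏ i, linForm y (v i)), ∏ i, (v i).2) :=
  rfl

theorem splitProd_comp_perm (x y : R) {n : ℕ} (v : Fin n → R × R) (σ : Equiv.Perm (Fin n)) :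
    splitProd x y n (v ∘ σ) = splitProd x y n v := by
  simp only [splitProd_apply, Function.comp_apply, Equiv.prod_comp σ fun i => linForm y (v i),
    Equiv.prod_comp σ fun i => (v i).2]

theorem splitProd_mem_of_syzygy {x y : R} (I : Ideal R) {n : ℕ} {v : Fin (n + 1) → R × R}
    {i : Fin (n + 1)} (hi : (v i).1 * x + (v i).2 * y = 0) :
    splitProd x y (n + 1) v ∈ (relationPairs x y I 0).map (mulFst (y ^ n)) := by
  refine ⟨(∏ j, (v (i.succAbove j)).2) • v i, Submodule.smul_mem _ _ ?_, ?_⟩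
  · exact mem_relationPairs.2 ⟨by simp, by simpa using hi⟩
  · rw [splitProd_apply, Fin.prod_univ_succAbove _ i, Fin.prod_univ_succAbove _ i,
      evalDivX_linForm_mul, coeff_zero_prod_linForm, hi]
    ext
    · simp only [mulFst_apply, Prod.smul_fst, smul_eq_mul, zero_mul, add_zero]
      ring
    · simp [mul_comm]

theorem splitProd_cons_one_zero (x y : R) {n : ℕ} (v : Fin n → R × R) :
    splitProd x y (n + 1) (Fin.cons (1, 0) v) = (∏ i, ((v i).1 * x + (v i).2 * y), 0) := by
  have eval_prod_linForm : (∏ i, linForm y (v i)).eval x = ∏ i, ((v i).1 * x + (v i).2 * y) := by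
    simp [eval_prod, linForm]
  simp [splitProd_apply, Fin.prod_univ_succ, evalDivX_linForm_mul, ← eval_prod_linForm,
    ← coeff_zero_add_mul_evalDivX]

theorem splitProd_const_zero_one (x y : R) (n : ℕ) :
    splitProd x y n (fun _ => (0, 1)) = (0, 1) := by
  have prod_const : (∏ _ : Fin n, linForm y (0, 1)) = C (y ^ n) := by
    simp [linForm]
  simp [splitProd_apply, prod_const, evalDivX, -map_pow]

end SplitProduct

namespace SymPow

variable {R : Type*} [CommRing R] {I : Ideal R} {x y : I}

theorem consAddNPow_mem_ker_alphaCan_iff {n : ℕ} {F : SymPow R I n} {c : R} :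
    consAddNPow x y n (F, c) ∈ LinearMap.ker (alphaCan R I (n + 1)) ↔
      (alphaCan R I n F, c) ∈ relationPairs (x : R) y I n := by
  have hF : alphaCan R I n F ∈ I ^ n := range_alphaCan.le (LinearMap.mem_range_self _ F)
  simp [mem_relationPairs, hF, mul_comm]

variable (hxy : Submodule.span R {x, y} = ⊤)
include hxy

theorem exists_linearMap_split (n : ℕ) :
    ∃ θ : SymPow R I (n + 1) →ₗ[R]
        (R × R) ⧸ (relationPairs (x : R) y I 0).map (mulFst ((y : R) ^ n)),
      (∀ F, θ (cons n x F) = Submodule.Quotient.mk (alphaCan R I n F, 0)) ∧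
        θ (npow y (n + 1)) = Submodule.Quotient.mk (0, 1) := by
  set B := (relationPairs (x : R) y I 0).map (mulFst ((y : R) ^ n))
  have hπ := pairCombination_surjective hxy
  obtain ⟨h, hh⟩ := exists_multilinearMap_compLinearMap_eq hπ
    (B.mkQ.compMultilinearMap (splitProd (x : R) y (n + 1))) fun v i hi =>
      (Submodule.Quotient.mk_eq_zero B).2 <|
        splitProd_mem_of_syzygy I (by simpa using congrArg Subtype.val hi)
  have h_apply (v : Fin (n + 1) → R × R) :
      h (pairCombination x y ∘ v) = B.mkQ (splitProd (x : R) y (n + 1) v) :=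
    MultilinearMap.congr_fun hh v
  obtain ⟨θ, hθ⟩ := exists_linearMap_apply_mk h fun v σ => by
    obtain ⟨v, rfl⟩ := hπ.comp_left v
    rw [Function.comp_assoc, h_apply, h_apply, splitProd_comp_perm]
  refine ⟨θ, fun F => ?_, ?_⟩
  · suffices h' : θ ∘ₗ cons n x = B.mkQ ∘ₗ LinearMap.inl R R R ∘ₗ alphaCan R I n from
      LinearMap.congr_fun h' F
    refine linearMap_ext fun v => ?_
    obtain ⟨v, rfl⟩ := hπ.comp_left v
    have cons_eq : (Fin.cons x (pairCombination x y ∘ v) : Fin (n + 1) → I) =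
        pairCombination x y ∘ Fin.cons (1, 0) v := by
      rw [Fin.comp_cons]
      simp
    rw [LinearMap.comp_apply, cons_mk, hθ, cons_eq, h_apply, splitProd_cons_one_zero]
    simp
  · have const_eq :
        (fun _ => y) = pairCombination x y ∘ fun _ : Fin (n + 1) => ((0, 1) : R × R) := by
      funext
      simp
    rw [npow, hθ, const_eq, h_apply, splitProd_const_zero_one, Submodule.mkQ_apply]

theorem mem_map_mulFst_of_consAddNPow_eq_zero {n : ℕ} {F : SymPow R I n} {c : R}
    (h : consAddNPow x y n (F, c) = 0) :
    (alphaCan R I n F, c) ∈ (relationPairs (x : R) y I 0).map (mulFst ((y : R) ^ n)) := by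
  obtain ⟨θ, hθx, hθy⟩ := exists_linearMap_split hxy n
  rw [← Submodule.Quotient.mk_eq_zero]
  calc Submodule.Quotient.mk (alphaCan R I n F, c)
      = Submodule.Quotient.mk ((alphaCan R I n F, 0) + c • (0, 1)) := by simp
    _ = θ (consAddNPow x y n (F, c)) := by
      rw [consAddNPow_apply, map_add, map_smul, hθx, hθy, Submodule.Quotient.mk_add,
        Submodule.Quotient.mk_smul]
    _ = 0 := by rw [h, map_zero]

theorem consAddNPow_mem_symOneMulKer_iff {k : ℕ} {F : SymPow R I (k + 1)} {c : R} :
    consAddNPow x y (k + 1) (F, c) ∈ symOneMulKer R I (k + 1) ↔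
      (alphaCan R I (k + 1) F, c) ∈ (relationPairs (x : R) y I k).map (mulFst (y : R)) := by
  rw [symOneMulKer_eq_sup hxy, Submodule.mem_sup]
  constructor
  · rintro ⟨_, ⟨G, hG, rfl⟩, _, ⟨H, hH, rfl⟩, h⟩
    obtain ⟨⟨U, d⟩, rfl⟩ := consAddNPow_surjective hxy k H
    have diff_eq_zero : consAddNPow x y (k + 1) (F - G - cons k y U, c - d) = 0 := by
      have : (F - G - cons k y U, c - d) = (F, c) - (G, 0) - (cons k y U, d) := by simp
      rw [this, map_sub, map_sub, ← h, cons_consAddNPow]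
      simp
    obtain ⟨p, hp, hpF⟩ := mem_map_mulFst_of_consAddNPow_eq_zero hxy diff_eq_zero
    refine ⟨(alphaCan R I k U, d) + mulFst ((y : R) ^ k) p, add_mem ?_ ?_, ?_⟩
    · exact consAddNPow_mem_ker_alphaCan_iff.1 hH
    · simpa using map_mulFst_pow_relationPairs_le y.2 0 k (Submodule.mem_map_of_mem hp)
    · obtain ⟨hq, hc⟩ := Prod.ext_iff.1 hpF
      simp only [mulFst_apply, map_sub, LinearMap.mem_ker.1 hG, alphaCan_cons] at hq hc
      ext
      · simp only [mulFst_apply, Prod.fst_add]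
        linear_combination hq
      · simp [hc]
  · rintro ⟨⟨u, d⟩, hu, huF⟩
    obtain ⟨hF, rfl⟩ : y * u = alphaCan R I (k + 1) F ∧ d = c := Prod.ext_iff.1 huF
    obtain ⟨U, rfl⟩ := range_alphaCan.ge (mem_relationPairs.1 hu).1
    refine ⟨_, ⟨F - cons k y U, ?_, rfl⟩, _, ⟨consAddNPow x y k (U, d), ?_, rfl⟩, ?_⟩
    · simp [hF]
    · exact consAddNPow_mem_ker_alphaCan_iff.2 hu
    · rw [cons_consAddNPow]
      simp only [consAddNPow_apply, map_sub]
      abel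

theorem nonempty_effRel_linearEquiv (k : ℕ) :
    Nonempty (EffRel R I (k + 1) ≃ₗ[R] relationPairs (x : R) y I (k + 1) ⧸
      ((relationPairs (x : R) y I k).map (mulFst (y : R))).comap
        (relationPairs (x : R) y I (k + 1)).subtype) := by
  refine nonempty_subquotient_linearEquiv (consAddNPow x y (k + 1))
    ((alphaCan R I (k + 1)).prodMap LinearMap.id) ?_ ?_ ?_ ?_
  · rw [LinearMap.range_eq_top.2 (consAddNPow_surjective hxy _)]
    exact le_top
  · rintro ⟨q, c⟩ hq
    obtain ⟨F, rfl⟩ := range_alphaCan.ge (mem_relationPairs.1 hq).1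
    exact ⟨(F, c), rfl⟩
  · exact Submodule.ext fun _ => consAddNPow_mem_ker_alphaCan_iff
  · exact Submodule.ext fun _ => consAddNPow_mem_symOneMulKer_iff hxy

end SymPow

section RelationPairsSequence

variable {R : Type*} [CommRing R] {x y : R} {I : Ideal R} {k : ℕ}

theorem mem_annCapPow {a : R} : a ∈ annCapPow x I k ↔ a * x = 0 ∧ a ∈ I ^ k := by
  rw [annCapPow, Submodule.mem_inf, Ideal.mem_colon_span_singleton, Ideal.mem_bot]

theorem mem_colonPow_iff_exists_mem_relationPairs {c : R} :
    c ∈ colonPow x y I k (k + 1) ↔ ∃ q, (q, c) ∈ relationPairs x y I k := by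
  rw [colonPow, Ideal.mem_colon_span_singleton, Ideal.mem_span_singleton_mul]
  constructor
  · rintro ⟨q, hq, h⟩
    exact ⟨-q, mem_relationPairs.2 ⟨neg_mem hq, by linear_combination -h⟩⟩
  · rintro ⟨q, hq⟩
    obtain ⟨hqI, h⟩ := mem_relationPairs.1 hq
    exact ⟨-q, neg_mem hqI, by linear_combination -h⟩

variable (x y I k) in
/-- The inclusion `a ↦ (a, 0)` of `(0 : x) ∩ Iᵏ` into the relation pairs. -/
noncomputable def relationPairsInl : annCapPow x I k →ₗ[R] relationPairs x y I k :=
  (LinearMap.inl R R R).restrict fun a ha => by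
    obtain ⟨hax, haI⟩ := mem_annCapPow.1 ha
    exact mem_relationPairs.2 ⟨haI, by simpa using hax⟩

variable (x y I k) in
/-- The projection `(q, c) ↦ c` of the relation pairs onto `(x Iᵏ : yᵏ⁺¹)`. -/
noncomputable def relationPairsSnd : relationPairs x y I k →ₗ[R] colonPow x y I k (k + 1) :=
  (LinearMap.snd R R R).restrict fun p hp =>
    mem_colonPow_iff_exists_mem_relationPairs.2 ⟨p.1, hp⟩

theorem relationPairsSnd_surjective : Function.Surjective (relationPairsSnd x y I k) := by
  rintro ⟨c, hc⟩
  obtain ⟨q, hq⟩ := mem_colonPow_iff_exists_mem_relationPairs.1 hc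
  exact ⟨⟨(q, c), hq⟩, rfl⟩

theorem exact_relationPairsInl_relationPairsSnd :
    Function.Exact (relationPairsInl x y I k) (relationPairsSnd x y I k) := by
  rintro ⟨⟨q, c⟩, hqc⟩
  constructor
  · intro h
    obtain rfl : c = 0 := congrArg Subtype.val h
    obtain ⟨hq, hx⟩ := mem_relationPairs.1 hqc
    exact ⟨⟨q, mem_annCapPow.2 ⟨by simpa using hx, hq⟩⟩, rfl⟩
  · rintro ⟨a, ha⟩
    rw [← ha]
    rfl

theorem inl_mem_map_mulFst_relationPairs_iff {a : R} :
    (a, 0) ∈ (relationPairs x y I k).map (mulFst y) ↔ a ∈ Ideal.span {y} * annCapPow x I k := by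
  rw [Ideal.mem_span_singleton_mul]
  constructor
  · rintro ⟨⟨u, d⟩, hu, h⟩
    obtain ⟨rfl, rfl⟩ : y * u = a ∧ d = 0 := Prod.ext_iff.1 h
    obtain ⟨huI, hux⟩ := mem_relationPairs.1 hu
    exact ⟨u, mem_annCapPow.2 ⟨by simpa using hux, huI⟩, rfl⟩
  · rintro ⟨u, hu, rfl⟩
    obtain ⟨hux, huI⟩ := mem_annCapPow.1 hu
    exact ⟨(u, 0), mem_relationPairs.2 ⟨huI, by simpa using hux⟩, rfl⟩

theorem comap_relationPairsInl :
    (((relationPairs x y I k).map (mulFst y)).comap (relationPairs x y I (k + 1)).subtype).comap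
        (relationPairsInl x y I (k + 1)) =
      Submodule.comap (annCapPow x I (k + 1)).subtype (Ideal.span {y} * annCapPow x I k) :=
  Submodule.ext fun _ => inl_mem_map_mulFst_relationPairs_iff

theorem map_relationPairsSnd (hy : y ∈ I) :
    (((relationPairs x y I k).map (mulFst y)).comap (relationPairs x y I (k + 1)).subtype).map
        (relationPairsSnd x y I (k + 1)) =
      Submodule.comap (colonPow x y I (k + 1) (k + 2)).subtype (colonPow x y I k (k + 1)) := by
  ext ⟨c, hc⟩
  rw [Submodule.mem_comap, Submodule.subtype_apply, mem_colonPow_iff_exists_mem_relationPairs]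
  constructor
  · rintro ⟨_, ⟨⟨u, d⟩, hu, hp⟩, hpc⟩
    obtain rfl : d = c := (congrArg Prod.snd hp).trans (congrArg Subtype.val hpc)
    exact ⟨u, hu⟩
  · rintro ⟨u, hu⟩
    have hyu : mulFst y (u, c) ∈ (relationPairs x y I k).map (mulFst y) :=
      Submodule.mem_map_of_mem hu
    have le_succ := map_mulFst_pow_relationPairs_le (x := x) hy k 1
    rw [pow_one] at le_succ
    exact ⟨⟨_, le_succ hyu⟩, hyu, rfl⟩

theorem exists_exact_relationPairs_quotient (hy : y ∈ I) :
    ∃ (f : (annCapPow x I (k + 1) ⧸ Submodule.comap (annCapPow x I (k + 1)).subtype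
          (Ideal.span {y} * annCapPow x I k)) →ₗ[R]
        (relationPairs x y I (k + 1) ⧸ ((relationPairs x y I k).map (mulFst y)).comap
          (relationPairs x y I (k + 1)).subtype))
      (g : (relationPairs x y I (k + 1) ⧸ ((relationPairs x y I k).map (mulFst y)).comap
          (relationPairs x y I (k + 1)).subtype) →ₗ[R]
        (colonPow x y I (k + 1) (k + 2) ⧸ Submodule.comap
          (colonPow x y I (k + 1) (k + 2)).subtype (colonPow x y I k (k + 1)))),
      Function.Injective f ∧ Function.Surjective g ∧ Function.Exact f g := by
  have hsnd := map_relationPairsSnd (x := x) (k := k) hy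
  refine ⟨Submodule.mapQ _ _ (relationPairsInl x y I (k + 1)) comap_relationPairsInl.ge,
    Submodule.mapQ _ _ (relationPairsSnd x y I (k + 1)) (Submodule.map_le_iff_le_comap.1 hsnd.le),
    ?_, ?_, ?_⟩
  · rw [← LinearMap.ker_eq_bot, Submodule.ker_mapQ, comap_relationPairsInl, Submodule.mkQ_map_self]
  · rw [← LinearMap.range_eq_top, Submodule.range_mapQ,
      LinearMap.range_eq_top.2 relationPairsSnd_surjective, Submodule.map_top, Submodule.range_mkQ]
  · exact (exact_relationPairsInl_relationPairsSnd.exact_mapQ_iff _ _).2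
      (inf_le_right.trans hsnd.ge)

end RelationPairsSequence

theorem SymPow.exists_exact_effRel {R : Type*} [CommRing R] {I : Ideal R} {x y : I}
    (hxy : Submodule.span R {x, y} = ⊤) (k : ℕ) :
    ∃ (f : (annCapPow (x : R) I (k + 1) ⧸ Submodule.comap (annCapPow (x : R) I (k + 1)).subtype
          (Ideal.span {(y : R)} * annCapPow (x : R) I k)) →ₗ[R] EffRel R I (k + 1))
      (g : EffRel R I (k + 1) →ₗ[R]
        (colonPow (x : R) y I (k + 1) (k + 2) ⧸ Submodule.comap
          (colonPow (x : R) y I (k + 1) (k + 2)).subtype (colonPow (x : R) y I k (k + 1)))),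
      Function.Injective f ∧ Function.Surjective g ∧ Function.Exact f g := by
  obtain ⟨e⟩ := nonempty_effRel_linearEquiv hxy k
  obtain ⟨f, g, hf, hg, hfg⟩ := exists_exact_relationPairs_quotient (x := (x : R)) (k := k) y.2
  exact ⟨e.symm.toLinearMap ∘ₗ f, g ∘ₗ e.toLinearMap, e.symm.injective.comp hf,
    hg.comp e.surjective, (LinearEquiv.conj_symm_exact_iff_exact f g e).2 hfg⟩

/-- For a two-generated ideal `I = (x,y)` and every `n ≥ 2` there is a short exact
sequence of `R`-modules
`0 → ((0:x) ∩ Iⁿ⁻¹)/(y((0:x) ∩ Iⁿ⁻²)) → E(I)ₙ → (xIⁿ⁻¹ : yⁿ)/(xIⁿ⁻² : yⁿ⁻¹) → 0`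
(here `EffRel R I (n-1) = E(I)ₙ`). -/
theorem statement14 {R : Type*} [CommRing R] (x y : R) (I : Ideal R)
    (hI : I = Ideal.span {x, y}) :
    ∀ n, 2 ≤ n →
      ∃ (f : (annCapPow x I (n - 1) ⧸
            Submodule.comap (annCapPow x I (n - 1)).subtype
              (Ideal.span {y} * annCapPow x I (n - 2)))
          →ₗ[R] EffRel R I (n - 1))
        (g : EffRel R I (n - 1) →ₗ[R]
          (colonPow x y I (n - 1) n ⧸
            Submodule.comap (colonPow x y I (n - 1) n).subtype
              (colonPow x y I (n - 2) (n - 1)))),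
        Function.Injective f ∧ Function.Surjective g ∧ Function.Exact f g := by
  intro n hn
  obtain ⟨k, rfl⟩ := Nat.exists_eq_add_of_le' hn
  have hx : x ∈ I := hI ▸ Ideal.mem_span_pair.2 ⟨1, 0, by simp⟩
  have hy : y ∈ I := hI ▸ Ideal.mem_span_pair.2 ⟨0, 1, by simp⟩
  have hxy : Submodule.span R {(⟨x, hx⟩ : I), ⟨y, hy⟩} = ⊤ := by
    refine (Submodule.eq_top_iff').2 fun ⟨z, hz⟩ => ?_
    obtain ⟨a, b, hab⟩ := Ideal.mem_span_pair.1 (hI ▸ hz)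
    exact Submodule.mem_span_pair.2 ⟨a, b, Subtype.ext hab⟩
  exact SymPow.exists_exact_effRel hxy k
end
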